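/- arXiv:1806.01441 — 2 statements merged into one kernel-verified Lean document; each statement's English description precedes it below -/
import Mathlib

section
/- (Existence and uniqueness for the nonlinear fractional Volterra integral equation) Let 0 < α ≤ 1, ψ increasing C¹ on I = [a,b], constants L > 0, M ≥ 0, δ > 1 with ξ = Lδ. Suppose f : I × ℝⁿ × ℝⁿ → ℝⁿ and k : I² × ℝⁿ → ℝⁿ are continuous and satisfy ‖f(t,u,v) − f(t,ū,v̄)‖ ≤ M(‖u−ū‖ + ‖v−v̄‖) and ‖k(t,s,u) − k(t,s,ū)‖ ≤ L‖u−ū‖, and that d₁ = sup_{t∈I} ‖f(t, 0, (1/Γ(α))∫_a^t ψ'(s)(ψ(t)−ψ(s))^{α−1} k(t,s,0) ds)‖ / E_α(ξ(ψ(t)−ψ(a))^α) < ∞. If M(1 + 1/δ) < 1, then the equation x(t) = f(t, x(t), (1/Γ(α)) ∫_a^t ψ'(s)(ψ(t)−ψ(s))^{α−1} k(t,s,x(s)) ds) has a unique continuous solution x : I → ℝⁿ. -/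
open MeasureTheory Set

/-- One-parameter Mittag-Leffler function `E_α(z) = ∑ z^k / Γ(αk+1)`. -/
noncomputable def ML (α z : ℝ) : ℝ := ∑' k : ℕ, z ^ k / Real.Gamma (α * k + 1)

/-- The Volterra-type integral operator
`(K x)(t) = (1/Γ(α)) ∫_a^t ψ'(s)(ψ(t)−ψ(s))^{α−1} k(t,s,x(s)) ds`. -/
noncomputable def volterraK {n : ℕ} (α : ℝ) (ψ : ℝ → ℝ) (a : ℝ)
    (k : ℝ → ℝ → EuclideanSpace ℝ (Fin n) → EuclideanSpace ℝ (Fin n))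
    (x : ℝ → EuclideanSpace ℝ (Fin n)) (t : ℝ) : EuclideanSpace ℝ (Fin n) :=
  (Real.Gamma α)⁻¹ • ∫ s in a..t, (deriv ψ s * (ψ t - ψ s) ^ (α - 1)) • k t s (x s)

/-!
The substitution `u = ψ s` turns the equation into one driven by the Riemann–Liouville integral of
order `α` on `[ψ a, ψ b]`. On the space of continuous functions with the weighted norm
`sup ‖x u‖ / exp (lam * (u - ψ a))`, that integral has norm at most `lam ^ (-α)`, the Laplace
transform of `r ^ (α - 1) / Γ(α)` at `lam`. So if `f` is a strict contraction in its second
argument, then for large `lam` the right-hand side of the equation is a contraction in the weighted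
norm, however large the Lipschitz constants in the other arguments are. The exponential replaces
the Mittag-Leffler weight `E_α(ξ (u - ψ a)^α)`, to which it is comparable for `lam = ξ ^ (1 / α)`.
-/

section WeightedContraction

variable {E : Type*} [NormedAddCommGroup E] [NormedSpace ℝ E] [CompleteSpace E]

theorem existsUnique_isFixedPt_of_weighted_contraction {X : Type*} [TopologicalSpace X]
    [CompactSpace X] {w : C(X, ℝ)} (hw : ∀ t, 0 < w t) {T : C(X, E) → C(X, E)} {q : ℝ}
    (hq0 : 0 ≤ q) (hq1 : q < 1)
    (hT : ∀ x y A, 0 ≤ A → (∀ s, ‖x s - y s‖ ≤ A * w s) → ∀ t, ‖T x t - T y t‖ ≤ q * A * w t) :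
    ∃! x, Function.IsFixedPt T x := by
  let w' : C(X, ℝ) := ⟨fun t => (w t)⁻¹, w.continuous.inv₀ fun t => (hw t).ne'⟩
  have hww' : w * w' = 1 := by ext t; exact mul_inv_cancel₀ (hw t).ne'
  have smul_smul' (z : C(X, E)) : w • w' • z = z := by rw [smul_smul, hww', one_smul]
  -- Dividing by `w` turns the weighted norm into the sup norm.
  let S : C(X, E) → C(X, E) := fun z => w' • T (w • z)
  have hS : ContractingWith (NNReal.mk q hq0) S := by
    refine ⟨by exact_mod_cast hq1, LipschitzWith.of_dist_le_mul fun z z' => ?_⟩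
    refine (ContinuousMap.dist_le (by positivity)).2 fun t => ?_
    have hzz' (s : X) : ‖(w • z) s - (w • z') s‖ ≤ dist z z' * w s := by
      simp only [ContinuousMap.smul_apply', ← smul_sub, norm_smul,
        Real.norm_of_nonneg (hw s).le, mul_comm (w s), ← dist_eq_norm]
      exact mul_le_mul_of_nonneg_right (ContinuousMap.dist_apply_le_dist s) (hw s).le
    calc dist (S z t) (S z' t) = (w t)⁻¹ * ‖T (w • z) t - T (w • z') t‖ := by
          simp only [S, w', ContinuousMap.smul_apply', ContinuousMap.coe_mk, dist_eq_norm,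
            ← smul_sub, norm_smul, norm_inv, Real.norm_of_nonneg (hw t).le]
      _ ≤ (w t)⁻¹ * (q * dist z z' * w t) :=
          mul_le_mul_of_nonneg_left (hT _ _ _ dist_nonneg hzz' t) (inv_nonneg.2 (hw t).le)
      _ = q * dist z z' := by have := (hw t).ne'; field_simp
  refine ⟨w • hS.fixedPoint, ?_, fun y hy => ?_⟩
  · have hfix : w' • T (w • hS.fixedPoint) = hS.fixedPoint := hS.fixedPoint_isFixedPt
    change T (w • hS.fixedPoint) = w • hS.fixedPoint
    rw [← smul_smul' (T _), hfix]
  · have hfix : S (w' • y) = w' • y := by simp only [S, smul_smul', hy.eq]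
    rw [← hS.fixedPoint_unique hfix, smul_smul']

theorem exists_eqOn_unique_of_weighted_contraction {c d q : ℝ} (hcd : c ≤ d) {w : ℝ → ℝ}
    (hwc : ContinuousOn w (Icc c d)) (hw : ∀ t ∈ Icc c d, 0 < w t) {T : (ℝ → E) → ℝ → E}
    (hq0 : 0 ≤ q) (hq1 : q < 1)
    (hTc : ∀ x, ContinuousOn x (Icc c d) → ContinuousOn (T x) (Icc c d))
    (hT : ∀ x y, ContinuousOn x (Icc c d) → ContinuousOn y (Icc c d) → ∀ A, 0 ≤ A →
      (∀ s ∈ Icc c d, ‖x s - y s‖ ≤ A * w s) → ∀ t ∈ Icc c d, ‖T x t - T y t‖ ≤ q * A * w t) :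
    ∃ x, (ContinuousOn x (Icc c d) ∧ EqOn x (T x) (Icc c d)) ∧
      ∀ y, ContinuousOn y (Icc c d) ∧ EqOn y (T y) (Icc c d) → EqOn y x (Icc c d) := by
  let ext (z : C(Icc c d, E)) : ℝ → E := IccExtend hcd z
  let res (x : ℝ → E) (hx : ContinuousOn x (Icc c d)) : C(Icc c d, E) :=
    ⟨(Icc c d).domRestrict x, hx.domRestrict⟩
  have ext_cont (z) : ContinuousOn (ext z) (Icc c d) := z.continuous.Icc_extend'.continuousOn
  have ext_apply (z) (t : Icc c d) : ext z t = z t := IccExtend_val hcd z t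
  obtain ⟨z, hz, hz_unique⟩ := existsUnique_isFixedPt_of_weighted_contraction
    (w := ⟨(Icc c d).domRestrict w, hwc.domRestrict⟩) (fun t => hw t t.2)
    (T := fun z => res (T (ext z)) (hTc _ (ext_cont z))) hq0 hq1
    (fun x y A hA hxy t => hT _ _ (ext_cont x) (ext_cont y) A hA
      (fun s hs => by simpa only [← ext_apply] using! hxy ⟨s, hs⟩) t t.2)
  refine ⟨ext z, ⟨ext_cont z, fun t ht => ?_⟩, fun y ⟨hyc, hy⟩ t ht => ?_⟩
  · exact (ext_apply z ⟨t, ht⟩).trans (DFunLike.congr_fun hz ⟨t, ht⟩).symm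
  · have hres : EqOn (ext (res y hyc)) y (Icc c d) := fun s hs => ext_apply _ ⟨s, hs⟩
    -- The case `A = 0` of `hT`: on `[c, d]`, `T x` depends only on the values of `x` there.
    have hTres : EqOn (T (ext (res y hyc))) (T y) (Icc c d) := fun s hs => by
      simpa [sub_eq_zero] using
        hT _ _ (ext_cont _) hyc 0 le_rfl (fun r hr => by simp [hres hr]) s hs
    have hfix : res y hyc = z :=
      hz_unique _ (ContinuousMap.ext fun s => (hTres s.2).trans (hy s.2).symm)
    rw [← hres ht, hfix]

end WeightedContraction

section FractionalIntegral

variable {E : Type*} [NormedAddCommGroup E] [NormedSpace ℝ E]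

/-- The fractional integral of order `α`, based at `a`, of a vector-valued function `h` with
respect to `ψ`. For `ψ = id` it is the Riemann–Liouville integral. -/
noncomputable def fracIntegral (α : ℝ) (ψ : ℝ → ℝ) (a : ℝ) (h : ℝ → E) (t : ℝ) : E :=
  (Real.Gamma α)⁻¹ • ∫ s in a..t, (deriv ψ s * (ψ t - ψ s) ^ (α - 1)) • h s

variable {α a c d t : ℝ} {ψ : ℝ → ℝ}

theorem fracIntegral_id (α c : ℝ) (h : ℝ → E) (t : ℝ) :
    fracIntegral α id c h t = (Real.Gamma α)⁻¹ • ∫ s in c..t, (t - s) ^ (α - 1) • h s := by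
  simp only [fracIntegral, deriv_id', one_mul, id]

theorem fracIntegral_congr {h h' : ℝ → E} (hat : a ≤ t) (hh' : EqOn h h' (Icc a t)) :
    fracIntegral α ψ a h t = fracIntegral α ψ a h' t := by
  refine congrArg _ (intervalIntegral.integral_congr fun s hs => ?_)
  simp only [hh' (uIcc_of_le hat ▸ hs)]

theorem fracIntegral_comp (hat : a ≤ t) (hmono : MonotoneOn ψ (Icc a t))
    (hc : ContinuousOn ψ (Icc a t)) (hd : DifferentiableOn ℝ ψ (Ioo a t)) (g : ℝ → E) :
    fracIntegral α ψ a (g ∘ ψ) t = fracIntegral α id (ψ a) g (ψ t) := by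
  have hderiv : ∀ s ∈ Ioo a t, HasDerivAt ψ (deriv ψ s) s := fun s hs =>
    (hd.differentiableAt (isOpen_Ioo.mem_nhds hs)).hasDerivAt
  have hderiv_nonneg : ∀ s ∈ Ioo a t, 0 ≤ deriv ψ s := fun s hs => by
    rw [← derivWithin_of_isOpen isOpen_Ioo hs]
    exact (hmono.mono Ioo_subset_Icc_self).derivWithin_nonneg
  have hψ : ψ a ≤ ψ t := hmono (left_mem_Icc.2 hat) (right_mem_Icc.2 hat) hat
  rw [fracIntegral_id, fracIntegral, intervalIntegral.integral_of_le hat,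
    intervalIntegral.integral_of_le hψ, ← integral_Icc_eq_integral_Ioc,
    ← integral_Icc_eq_integral_Ioc, ← integral_Icc_deriv_smul_of_deriv_nonneg hc hderiv
      hderiv_nonneg hat]
  simp only [mul_smul, Function.comp_apply]

theorem intervalIntegrable_sub_rpow (hα : 0 < α) (c d t : ℝ) :
    IntervalIntegrable (fun s => (t - s) ^ (α - 1)) volume c d := by
  simpa using (intervalIntegral.intervalIntegrable_rpow' (a := t - c) (b := t - d)
    (r := α - 1) (by linarith)).comp_sub_left t

theorem fracIntegral_id_sub {h h' : ℝ → E} (hα : 0 < α) (hh : ContinuousOn h (uIcc c t))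
    (hh' : ContinuousOn h' (uIcc c t)) :
    fracIntegral α id c h t - fracIntegral α id c h' t =
      fracIntegral α id c (fun s => h s - h' s) t := by
  have hint := intervalIntegrable_sub_rpow hα c t t
  simp only [fracIntegral_id, smul_sub, intervalIntegral.integral_sub
    (hint.smul_continuousOn hh) (hint.smul_continuousOn hh')]

theorem fracIntegral_id_eq_integral_unitInterval (hα : 0 < α) (hct : c ≤ t) (h : ℝ → E) :
    fracIntegral α id c h t = (Real.Gamma α)⁻¹ • (t - c) ^ α •
      ∫ r in (0 : ℝ)..1, r ^ (α - 1) • h (t - (t - c) * r) := by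
  have hD : 0 ≤ t - c := sub_nonneg.2 hct
  have hpow : (t - c) ^ α = (t - c) * (t - c) ^ (α - 1) := by
    rw [mul_comm, ← Real.rpow_add_one' hD (by simpa using hα.ne'), sub_add_cancel]
  have hsubst := intervalIntegral.smul_integral_comp_sub_mul (a := 0) (b := 1)
    (fun s => (t - s) ^ (α - 1) • h s) (t - c) t
  simp only [mul_one, mul_zero, sub_zero, sub_sub_cancel] at hsubst
  rw [fracIntegral_id, ← hsubst, hpow, mul_smul]
  congr 2
  rw [← intervalIntegral.integral_smul]
  refine intervalIntegral.integral_congr fun r hr => ?_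
  rw [uIcc_of_le zero_le_one] at hr
  simp only [Real.mul_rpow hD hr.1, mul_smul]

theorem continuousOn_fracIntegral_id (hα : 0 < α) {g : ℝ → ℝ → E}
    (hg : ContinuousOn (fun p : ℝ × ℝ => g p.1 p.2) (Icc c d ×ˢ Icc c d)) :
    ContinuousOn (fun t => fracIntegral α id c (g t) t) (Icc c d) := by
  have hmaps : ∀ t ∈ Icc c d, ∀ r ∈ Icc (0 : ℝ) 1, t - (t - c) * r ∈ Icc c d := fun t ht r hr =>
    ⟨by nlinarith [ht.1, hr.2], by nlinarith [ht.1, ht.2, hr.1]⟩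
  obtain ⟨C, hC⟩ := (isCompact_Icc.prod isCompact_Icc).exists_bound_of_continuousOn hg
  have hrpow : IntegrableOn (fun r : ℝ => r ^ (α - 1)) (Ioc 0 1) :=
    (intervalIntegrable_iff_integrableOn_Ioc_of_le zero_le_one).1
      (intervalIntegral.intervalIntegrable_rpow' (by linarith))
  have hint : ContinuousOn
      (fun t => ∫ r in Ioc (0 : ℝ) 1, r ^ (α - 1) • g t (t - (t - c) * r)) (Icc c d) := by
    refine continuousOn_of_dominated (bound := fun r => r ^ (α - 1) * C) (fun t ht => ?_)
      (fun t ht => ?_) (hrpow.mul_const C) ?_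
    · have hgt : ContinuousOn (fun r => g t (t - (t - c) * r)) (Ioc 0 1) :=
        hg.comp (f := fun r => (t, t - (t - c) * r)) (by fun_prop)
          fun r hr => ⟨ht, hmaps t ht r (Ioc_subset_Icc_self hr)⟩
      exact hrpow.aestronglyMeasurable.smul (hgt.aestronglyMeasurable measurableSet_Ioc)
    · filter_upwards [ae_restrict_mem measurableSet_Ioc] with r hr
      have hr0 : 0 ≤ r ^ (α - 1) := Real.rpow_nonneg hr.1.le _
      rw [norm_smul, Real.norm_of_nonneg hr0]
      exact mul_le_mul_of_nonneg_left
        (hC (t, _) ⟨ht, hmaps t ht r (Ioc_subset_Icc_self hr)⟩) hr0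
    · filter_upwards [ae_restrict_mem measurableSet_Ioc] with r hr
      have hgr : ContinuousOn (fun t => g t (t - (t - c) * r)) (Icc c d) :=
        hg.comp (f := fun t => (t, t - (t - c) * r)) (by fun_prop)
          fun t ht => ⟨ht, hmaps t ht r (Ioc_subset_Icc_self hr)⟩
      exact hgr.const_smul _
  have hpow : ContinuousOn (fun t => (t - c) ^ α) (Icc c d) :=
    ContinuousOn.rpow_const (by fun_prop) fun _ _ => Or.inr hα.le
  refine ((hpow.smul hint).const_smul (Real.Gamma α)⁻¹).congr fun t ht => ?_
  rw [fracIntegral_id_eq_integral_unitInterval hα ht.1,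
    intervalIntegral.integral_of_le zero_le_one]
  rfl

theorem integral_sub_rpow_mul_exp_le {lam : ℝ} (hα : 0 < α) (hlam : 0 < lam) (hct : c ≤ t) :
    ∫ s in c..t, (t - s) ^ (α - 1) * Real.exp (lam * (s - c)) ≤
      (1 / lam) ^ α * Real.Gamma α * Real.exp (lam * (t - c)) := by
  have hlaplace := Real.integral_rpow_mul_exp_neg_mul_Ioi hα hlam
  have hint : IntegrableOn (fun r : ℝ => r ^ (α - 1) * Real.exp (-(lam * r))) (Ioi 0) := by
    simpa [neg_mul] using
      integrableOn_rpow_mul_exp_neg_mul_rpow (s := α - 1) (by linarith) one_pos hlam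
  have hreflect : ∫ s in c..t, (t - s) ^ (α - 1) * Real.exp (lam * (s - c)) =
      (∫ r in (0 : ℝ)..(t - c), r ^ (α - 1) * Real.exp (-(lam * r))) *
        Real.exp (lam * (t - c)) := by
    rw [← sub_self t, ← intervalIntegral.integral_comp_sub_left, ←
      intervalIntegral.integral_mul_const]
    refine intervalIntegral.integral_congr fun s _ => ?_
    simp only [mul_assoc, ← Real.exp_add]
    ring_nf
  rw [hreflect, ← hlaplace, intervalIntegral.integral_of_le (sub_nonneg.2 hct)]
  refine mul_le_mul_of_nonneg_right
    (setIntegral_mono_set hint ?_ Ioc_subset_Ioi_self.eventuallyLE) (Real.exp_pos _).le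
  filter_upwards [ae_restrict_mem measurableSet_Ioi] with r hr
  exact mul_nonneg (Real.rpow_nonneg (le_of_lt hr) _) (Real.exp_pos _).le

theorem norm_fracIntegral_id_le {lam A : ℝ} {h : ℝ → E} (hα : 0 < α) (hlam : 0 < lam)
    (hA : 0 ≤ A) (hct : c ≤ t)
    (hh : ∀ s ∈ Icc c t, ‖h s‖ ≤ A * Real.exp (lam * (s - c))) :
    ‖fracIntegral α id c h t‖ ≤ (1 / lam) ^ α * A * Real.exp (lam * (t - c)) := by
  have hΓ : 0 < Real.Gamma α := Real.Gamma_pos_of_pos hα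
  have hint : IntervalIntegrable
      (fun s => A * ((t - s) ^ (α - 1) * Real.exp (lam * (s - c)))) volume c t :=
    ((intervalIntegrable_sub_rpow hα c t t).mul_continuousOn (by fun_prop)).const_mul A
  have hpointwise : ∀ s ∈ Ioc c t, ‖(t - s) ^ (α - 1) • h s‖ ≤
      A * ((t - s) ^ (α - 1) * Real.exp (lam * (s - c))) := fun s hs => by
    have hpow : 0 ≤ (t - s) ^ (α - 1) := Real.rpow_nonneg (sub_nonneg.2 hs.2) _
    rw [norm_smul, Real.norm_of_nonneg hpow, mul_left_comm]
    exact mul_le_mul_of_nonneg_left (hh s (Ioc_subset_Icc_self hs)) hpow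
  rw [fracIntegral_id, norm_smul, norm_inv, Real.norm_of_nonneg hΓ.le]
  calc (Real.Gamma α)⁻¹ * ‖∫ s in c..t, (t - s) ^ (α - 1) • h s‖
      ≤ (Real.Gamma α)⁻¹ * (A * ∫ s in c..t, (t - s) ^ (α - 1) * Real.exp (lam * (s - c))) := by
        rw [← intervalIntegral.integral_const_mul]
        gcongr
        exact intervalIntegral.norm_integral_le_of_norm_le hct
          (Filter.Eventually.of_forall hpointwise) hint
    _ ≤ (Real.Gamma α)⁻¹ *
          (A * ((1 / lam) ^ α * Real.Gamma α * Real.exp (lam * (t - c)))) := by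
        gcongr
        exact integral_sub_rpow_mul_exp_le hα hlam hct
    _ = (1 / lam) ^ α * A * Real.exp (lam * (t - c)) := by field_simp

end FractionalIntegral

section VolterraEquation

variable {E : Type*} [NormedAddCommGroup E] [NormedSpace ℝ E]
  {α a b c d L M N : ℝ} {ψ φ : ℝ → ℝ} {f : ℝ → E → E → E} {k : ℝ → ℝ → E → E} {x y : ℝ → E}

/-- The operator `x ↦ f(t, x(t), (I k(t, ·, x(·)))(t))`, with `I` the fractional integral of order
`α` with respect to `ψ`, whose fixed points are the solutions of the Volterra equation. -/
noncomputable def volterraMap (α : ℝ) (ψ : ℝ → ℝ) (a : ℝ) (f : ℝ → E → E → E)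
    (k : ℝ → ℝ → E → E) (x : ℝ → E) (t : ℝ) : E :=
  f t (x t) (fracIntegral α ψ a (fun s => k t s (x s)) t)

/-- `x` solves the Volterra equation on `[a, b]` and is continuous there; nothing is required of
its values outside `[a, b]`. -/
def IsVolterraSolution (α : ℝ) (ψ : ℝ → ℝ) (a b : ℝ) (f : ℝ → E → E → E) (k : ℝ → ℝ → E → E)
    (x : ℝ → E) : Prop :=
  ContinuousOn x (Icc a b) ∧ EqOn x (volterraMap α ψ a f k x) (Icc a b)

theorem continuousOn_volterraMap_id (hα : 0 < α)
    (hf : ContinuousOn (fun p : ℝ × E × E => f p.1 p.2.1 p.2.2) (Icc c d ×ˢ univ))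
    (hk : ContinuousOn (fun p : ℝ × ℝ × E => k p.1 p.2.1 p.2.2) (Icc c d ×ˢ Icc c d ×ˢ univ))
    (hx : ContinuousOn x (Icc c d)) :
    ContinuousOn (volterraMap α id c f k x) (Icc c d) := by
  have hkx : ContinuousOn (fun p : ℝ × ℝ => k p.1 p.2 (x p.2)) (Icc c d ×ˢ Icc c d) :=
    hk.comp (continuousOn_fst.prodMk (continuousOn_snd.prodMk
      (hx.comp continuousOn_snd fun p hp => hp.2))) fun p hp => ⟨hp.1, hp.2, mem_univ _⟩
  exact hf.comp (continuousOn_id.prodMk (hx.prodMk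
    (continuousOn_fracIntegral_id hα hkx))) fun t ht => ⟨ht, mem_univ _⟩

theorem norm_volterraMap_id_sub_le {lam A : ℝ} (hα : 0 < α) (hlam : 0 < lam) (hL : 0 ≤ L)
    (hM : 0 ≤ M) (hN : 0 ≤ N) (hA : 0 ≤ A)
    (hk : ContinuousOn (fun p : ℝ × ℝ × E => k p.1 p.2.1 p.2.2) (Icc c d ×ˢ Icc c d ×ˢ univ))
    (hfLip : ∀ t ∈ Icc c d, ∀ u v u' v',
      ‖f t u v - f t u' v'‖ ≤ M * ‖u - u'‖ + N * ‖v - v'‖)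
    (hkLip : ∀ t ∈ Icc c d, ∀ s ∈ Icc c d, ∀ u u', ‖k t s u - k t s u'‖ ≤ L * ‖u - u'‖)
    (hx : ContinuousOn x (Icc c d)) (hy : ContinuousOn y (Icc c d))
    (hxy : ∀ s ∈ Icc c d, ‖x s - y s‖ ≤ A * Real.exp (lam * (s - c))) :
    ∀ t ∈ Icc c d, ‖volterraMap α id c f k x t - volterraMap α id c f k y t‖ ≤
      (M + N * L * (1 / lam) ^ α) * A * Real.exp (lam * (t - c)) := by
  intro t ht
  have hsub : Icc c t ⊆ Icc c d := Icc_subset_Icc_right ht.2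
  have hkc {z : ℝ → E} (hz : ContinuousOn z (Icc c d)) :
      ContinuousOn (fun s => k t s (z s)) (uIcc c t) := by
    rw [uIcc_of_le ht.1]
    exact hk.comp (continuousOn_const.prodMk (continuousOn_id.prodMk (hz.mono hsub)))
      fun s hs => ⟨ht, hsub hs, mem_univ _⟩
  have hfrac : ‖fracIntegral α id c (fun s => k t s (x s)) t -
      fracIntegral α id c (fun s => k t s (y s)) t‖ ≤
        (1 / lam) ^ α * (L * A) * Real.exp (lam * (t - c)) := by
    rw [fracIntegral_id_sub hα (hkc hx) (hkc hy)]
    refine norm_fracIntegral_id_le hα hlam (by positivity) ht.1 fun s hs => ?_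
    rw [mul_assoc]
    exact (hkLip t ht s (hsub hs) _ _).trans (mul_le_mul_of_nonneg_left (hxy s (hsub hs)) hL)
  calc _ ≤ M * ‖x t - y t‖ + N * ‖fracIntegral α id c (fun s => k t s (x s)) t -
        fracIntegral α id c (fun s => k t s (y s)) t‖ := hfLip t ht _ _ _ _
    _ ≤ M * (A * Real.exp (lam * (t - c))) +
        N * ((1 / lam) ^ α * (L * A) * Real.exp (lam * (t - c))) := by
      gcongr
      exact hxy t ht
    _ = _ := by ring

theorem exists_pos_add_mul_one_div_rpow_lt_one (hα : 0 < α) (hM : M < 1) (C : ℝ) :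
    ∃ lam : ℝ, 0 < lam ∧ M + C * (1 / lam) ^ α < 1 := by
  have hzero : Filter.Tendsto (fun lam : ℝ => (1 / lam) ^ α) Filter.atTop (nhds 0) := by
    simpa [Real.zero_rpow hα.ne'] using
      tendsto_inv_atTop_zero.rpow_const (p := α) (Or.inr hα.le)
  have hlim : Filter.Tendsto (fun lam : ℝ => M + C * (1 / lam) ^ α) Filter.atTop (nhds M) := by
    simpa using (hzero.const_mul C).const_add M
  exact ((Filter.eventually_gt_atTop 0).and (hlim.eventually_lt_const hM)).exists

theorem exists_isVolterraSolution_id_unique [CompleteSpace E] (hα : 0 < α) (hcd : c ≤ d)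
    (hL : 0 ≤ L) (hM0 : 0 ≤ M) (hM1 : M < 1) (hN : 0 ≤ N)
    (hf : ContinuousOn (fun p : ℝ × E × E => f p.1 p.2.1 p.2.2) (Icc c d ×ˢ univ))
    (hk : ContinuousOn (fun p : ℝ × ℝ × E => k p.1 p.2.1 p.2.2) (Icc c d ×ˢ Icc c d ×ˢ univ))
    (hfLip : ∀ t ∈ Icc c d, ∀ u v u' v',
      ‖f t u v - f t u' v'‖ ≤ M * ‖u - u'‖ + N * ‖v - v'‖)
    (hkLip : ∀ t ∈ Icc c d, ∀ s ∈ Icc c d, ∀ u u', ‖k t s u - k t s u'‖ ≤ L * ‖u - u'‖) :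
    ∃ x, IsVolterraSolution α id c d f k x ∧
      ∀ y, IsVolterraSolution α id c d f k y → EqOn y x (Icc c d) := by
  obtain ⟨lam, hlam, hq⟩ := exists_pos_add_mul_one_div_rpow_lt_one hα hM1 (N * L)
  exact exists_eqOn_unique_of_weighted_contraction hcd
    (w := fun t => Real.exp (lam * (t - c))) (by fun_prop) (fun _ _ => Real.exp_pos _)
    (by positivity) hq (fun _ hx => continuousOn_volterraMap_id hα hf hk hx)
    (fun _ _ hx hy A hA hxy =>
      norm_volterraMap_id_sub_le hα hlam hL hM0 hN hA hk hfLip hkLip hx hy hxy)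

theorem volterraMap_congr {t : ℝ} (hat : a ≤ t) (hxy : EqOn x y (Icc a t)) :
    volterraMap α ψ a f k x t = volterraMap α ψ a f k y t := by
  rw [volterraMap, volterraMap, hxy (right_mem_Icc.2 hat),
    fracIntegral_congr hat fun s hs => congrArg (k t s) (hxy hs)]

theorem IsVolterraSolution.congr (hx : IsVolterraSolution α ψ a b f k x)
    (hxy : EqOn y x (Icc a b)) : IsVolterraSolution α ψ a b f k y :=
  ⟨hx.1.congr hxy, fun _ ht => (hxy ht).trans <| (hx.2 ht).trans <|
    volterraMap_congr ht.1 (hxy.symm.mono (Icc_subset_Icc_right ht.2))⟩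

theorem continuousOn_image_of_leftInvOn_of_isCompact {X Y : Type*} [TopologicalSpace X]
    [TopologicalSpace Y] [T2Space Y] {s : Set X} {g : X → Y} {g' : Y → X} (hs : IsCompact s)
    (hg : ContinuousOn g s) (hleft : LeftInvOn g' g s) : ContinuousOn g' (g '' s) := by
  have : CompactSpace s := isCompact_iff_compactSpace.1 hs
  have hemb := hg.domRestrict.isClosedEmbedding hleft.injOn.injective
  rw [← range_domRestrict, ← image_univ, hemb.isInducing.continuousOn_image_iff]
  exact continuous_subtype_val.continuousOn.congr fun p _ => hleft p.2

theorem volterraMap_comp {t : ℝ} (hat : a ≤ t) (hmono : MonotoneOn ψ (Icc a t))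
    (hc : ContinuousOn ψ (Icc a t)) (hd : DifferentiableOn ℝ ψ (Ioo a t))
    (hφ : LeftInvOn φ ψ (Icc a t)) (y : ℝ → E) :
    volterraMap α ψ a f k (y ∘ ψ) t =
      volterraMap α id (ψ a) (fun v => f (φ v)) (fun v u => k (φ v) (φ u)) y (ψ t) := by
  simp only [volterraMap, hφ (right_mem_Icc.2 hat), Function.comp_apply,
    ← fracIntegral_comp hat hmono hc hd]
  rw [fracIntegral_congr hat fun s hs => ?_]
  simp only [Function.comp_apply, hφ hs]

theorem isVolterraSolution_comp_iff (hab : a ≤ b) (hmono : MonotoneOn ψ (Icc a b))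
    (hc : ContinuousOn ψ (Icc a b)) (hd : DifferentiableOn ℝ ψ (Ioo a b))
    (hφ : LeftInvOn φ ψ (Icc a b)) :
    IsVolterraSolution α ψ a b f k (y ∘ ψ) ↔
      IsVolterraSolution α id (ψ a) (ψ b) (fun v => f (φ v)) (fun v u => k (φ v) (φ u)) y := by
  have hφc := continuousOn_image_of_leftInvOn_of_isCompact isCompact_Icc hc hφ
  have hcont : ContinuousOn (y ∘ ψ) (Icc a b) ↔ ContinuousOn y (ψ '' Icc a b) := by
    refine ⟨fun hy => (hy.comp hφc (hφ.mapsTo (surjOn_image ψ _))).congr ?_,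
      fun hy => hy.comp hc (mapsTo_image ψ _)⟩
    exact forall_mem_image.2 fun t ht => by simp only [Function.comp_apply, hφ ht]
  rw [IsVolterraSolution, IsVolterraSolution, ← hc.image_Icc_of_monotoneOn hab hmono, hcont]
  simp only [EqOn, forall_mem_image, Function.comp_apply]
  refine and_congr_right fun _ => forall₂_congr fun t ht => ?_
  have hsub : Icc a t ⊆ Icc a b := Icc_subset_Icc_right ht.2
  rw [volterraMap_comp ht.1 (hmono.mono hsub) (hc.mono hsub)
    (hd.mono (Ioo_subset_Ioo_right ht.2)) (hφ.mono hsub)]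

theorem volterra_existence_uniqueness_general [CompleteSpace E] (hα : 0 < α) (hab : a ≤ b)
    (hmono : StrictMonoOn ψ (Icc a b)) (hc : ContinuousOn ψ (Icc a b))
    (hd : DifferentiableOn ℝ ψ (Ioo a b))
    (hL : 0 ≤ L) (hM0 : 0 ≤ M) (hM1 : M < 1) (hN : 0 ≤ N)
    (hf : ContinuousOn (fun p : ℝ × E × E => f p.1 p.2.1 p.2.2) (Icc a b ×ˢ univ))
    (hk : ContinuousOn (fun p : ℝ × ℝ × E => k p.1 p.2.1 p.2.2) (Icc a b ×ˢ Icc a b ×ˢ univ))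
    (hfLip : ∀ t ∈ Icc a b, ∀ u v u' v',
      ‖f t u v - f t u' v'‖ ≤ M * ‖u - u'‖ + N * ‖v - v'‖)
    (hkLip : ∀ t ∈ Icc a b, ∀ s ∈ Icc a b, ∀ u u', ‖k t s u - k t s u'‖ ≤ L * ‖u - u'‖) :
    ∃ x, IsVolterraSolution α ψ a b f k x ∧
      ∀ y, IsVolterraSolution α ψ a b f k y → EqOn y x (Icc a b) := by
  let φ := Function.invFunOn ψ (Icc a b)
  have hφ : LeftInvOn φ ψ (Icc a b) := hmono.injOn.leftInvOn_invFunOn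
  have himage : ψ '' Icc a b = Icc (ψ a) (ψ b) :=
    hc.image_Icc_of_monotoneOn hab hmono.monotoneOn
  have hφc : ContinuousOn φ (Icc (ψ a) (ψ b)) :=
    himage ▸ continuousOn_image_of_leftInvOn_of_isCompact isCompact_Icc hc hφ
  have hφm : MapsTo φ (Icc (ψ a) (ψ b)) (Icc a b) := hφ.mapsTo (himage ▸ surjOn_image ψ _)
  have hfφ : ContinuousOn (fun p : ℝ × E × E => f (φ p.1) p.2.1 p.2.2)
      (Icc (ψ a) (ψ b) ×ˢ univ) :=
    hf.comp (f := fun p : ℝ × E × E => (φ p.1, p.2))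
      ((hφc.comp continuousOn_fst fun p hp => hp.1).prodMk continuousOn_snd)
      fun p hp => ⟨hφm hp.1, mem_univ _⟩
  have hkφ : ContinuousOn (fun p : ℝ × ℝ × E => k (φ p.1) (φ p.2.1) p.2.2)
      (Icc (ψ a) (ψ b) ×ˢ Icc (ψ a) (ψ b) ×ˢ univ) :=
    hk.comp (f := fun p : ℝ × ℝ × E => (φ p.1, φ p.2.1, p.2.2))
      ((hφc.comp continuousOn_fst fun p hp => hp.1).prodMk
        ((hφc.comp (by fun_prop) fun p hp => hp.2.1).prodMk (by fun_prop)))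
      fun p hp => ⟨hφm hp.1, hφm hp.2.1, mem_univ _⟩
  have hiff (y : ℝ → E) : IsVolterraSolution α ψ a b f k (y ∘ ψ) ↔
      IsVolterraSolution α id (ψ a) (ψ b) (fun v => f (φ v)) (fun v u => k (φ v) (φ u)) y :=
    isVolterraSolution_comp_iff hab hmono.monotoneOn hc hd hφ
  obtain ⟨y, hy, hy_unique⟩ := exists_isVolterraSolution_id_unique hα
    (hmono.monotoneOn (left_mem_Icc.2 hab) (right_mem_Icc.2 hab) hab) hL hM0 hM1 hN hfφ hkφ
    (fun v hv => hfLip _ (hφm hv)) (fun v hv u hu => hkLip _ (hφm hv) _ (hφm hu))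
  refine ⟨y ∘ ψ, (hiff y).2 hy, fun x hx t ht => ?_⟩
  have hxφ : EqOn ((x ∘ φ) ∘ ψ) x (Icc a b) := fun s hs => congrArg x (hφ hs)
  rw [← hxφ ht]
  exact hy_unique _ ((hiff _).1 (hx.congr hxφ)) (himage ▸ mem_image_of_mem ψ ht)

end VolterraEquation

theorem volterra_existence_uniqueness
    (n : ℕ) (a b α L M δ ξ : ℝ) (ψ : ℝ → ℝ)
    (f : ℝ → EuclideanSpace ℝ (Fin n) → EuclideanSpace ℝ (Fin n) → EuclideanSpace ℝ (Fin n))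
    (k : ℝ → ℝ → EuclideanSpace ℝ (Fin n) → EuclideanSpace ℝ (Fin n))
    (hα0 : 0 < α) (hα1 : α ≤ 1) (hab : a ≤ b)
    (hmono : StrictMonoOn ψ (Icc a b)) (hC1 : ContDiffOn ℝ 1 ψ (Icc a b))
    (hL : 0 < L) (hM : 0 ≤ M) (hδ : 1 < δ) (hξ : ξ = L * δ)
    (hf : Continuous fun p : ℝ × EuclideanSpace ℝ (Fin n) × EuclideanSpace ℝ (Fin n) =>
      f p.1 p.2.1 p.2.2)
    (hk : Continuous fun p : ℝ × ℝ × EuclideanSpace ℝ (Fin n) => k p.1 p.2.1 p.2.2)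
    (hfLip : ∀ t u v u' v', ‖f t u v - f t u' v'‖ ≤ M * (‖u - u'‖ + ‖v - v'‖))
    (hkLip : ∀ t s u u', ‖k t s u - k t s u'‖ ≤ L * ‖u - u'‖)
    (hd1 : BddAbove ((fun t =>
      ‖f t 0 (volterraK α ψ a k (fun _ => 0) t)‖ / ML α (ξ * (ψ t - ψ a) ^ α)) '' Icc a b))
    (hcontr : M * (1 + 1 / δ) < 1) :
    ∃ x : ℝ → EuclideanSpace ℝ (Fin n),
      (ContinuousOn x (Icc a b) ∧
        ∀ t ∈ Icc a b, x t = f t (x t) (volterraK α ψ a k x t)) ∧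
      ∀ y : ℝ → EuclideanSpace ℝ (Fin n),
        (ContinuousOn y (Icc a b) ∧
          ∀ t ∈ Icc a b, y t = f t (y t) (volterraK α ψ a k y t)) →
        ∀ t ∈ Icc a b, y t = x t := by
  have hM1 : M < 1 :=
    (le_mul_of_one_le_right hM (le_add_of_nonneg_right (by positivity))).trans_lt hcontr
  exact volterra_existence_uniqueness_general hα0 hab hmono hC1.continuousOn
    ((hC1.differentiableOn one_ne_zero).mono Ioo_subset_Icc_self) hL.le hM hM1 hM
    hf.continuousOn hk.continuousOn
    (fun t _ u v u' v' => (hfLip t u v u' v').trans_eq (mul_add _ _ _))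
    (fun t _ s _ => hkLip t s)
end

section
/- (Existence and uniqueness for the ψ-Hilfer integrodifferential equation) Let 0 < α ≤ 1, 0 ≤ β ≤ 1, γ = α + β(1−α), ψ increasing C¹ on I = [a,b], L > 0, M ≥ 0, δ > 1, ξ = Lδ. Suppose f, k are continuous with ‖f(t,u,v)−f(t,ū,v̄)‖ ≤ M(‖u−ū‖+‖v−v̄‖), ‖k(t,s,u)−k(t,s,ū)‖ ≤ L‖u−ū‖, and d₂ = sup_{t∈I} ‖Ψ^γ(t,a)x₀ − I_{a+}^{α,ψ} f(·, 0, (1/Γ(α))∫_a^· ψ'(σ)(ψ(·)−ψ(σ))^{α−1} k(·,σ,0)dσ)(t)‖ / E_α(ξ(ψ(t)−ψ(a))^α) < ∞. If (M/ξ)(1 + 1/δ) < 1, then the ψ-Hilfer problem ^H𝔻_{a+}^{α,β,ψ} x(t) = f(t, x(t), (1/Γ(α))∫_a^t ψ'(s)(ψ(t)−ψ(s))^{α−1} k(t,s,x(s))ds), I_{a+}^{1−γ,ψ}x(a) = x₀, has a unique solution x in C_ξ(I, ℝⁿ), i.e., the equivalent integral equation x(t) = Ψ^γ(t,a)x₀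 + I_{a+}^{α,ψ} f(·, x(·), ...)(t) has a unique solution. -/
/-!
With respect to a weight `t ↦ exp (r (ψ t - ψ a))` the fractional integral `I_{a+}^{α,ψ}` has norm
at most `r ^ (-α)`, so for `r` large the Picard operator of the integral equation is a contraction,
whatever the Lipschitz constants. The forcing term `(ψ t - ψ a) ^ (γ - 1) x₀ / Γ(γ)` may blow up at
`a`; but the Mittag-Leffler weight is bounded on `[a, b]`, so finiteness of `d₂` forces `1 ≤ γ` or
`x₀ = 0`, and in both cases the forcing term is continuous.
-/

open MeasureTheory Set

/-- ψ-Riemann–Liouville fractional integral of order μ (with `I^{0,ψ} = id`). -/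
noncomputable def fracIntV {n : ℕ} (μ : ℝ) (ψ : ℝ → ℝ) (a : ℝ)
    (x : ℝ → EuclideanSpace ℝ (Fin n)) (t : ℝ) : EuclideanSpace ℝ (Fin n) :=
  if μ = 0 then x t
  else (Real.Gamma μ)⁻¹ • ∫ s in a..t, (deriv ψ s * (ψ t - ψ s) ^ (μ - 1)) • x s

open Filter Topology

section MittagLeffler

variable {α : ℝ}

theorem rpow_mul_exp_neg_le_Gamma_add_one {R x : ℝ} (hR : 0 ≤ R) (hx : 0 ≤ x) :
    R ^ x * Real.exp (-R) ≤ Real.Gamma (x + 1) := by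
  have hint : IntegrableOn (fun v => Real.exp (-v) * v ^ x) (Ioi 0) := by
    simpa only [add_sub_cancel_right] using Real.GammaIntegral_convergent (s := x + 1) (by linarith)
  calc R ^ x * Real.exp (-R) = ∫ v in Ioi R, R ^ x * Real.exp (-v) := by
        rw [integral_const_mul, integral_exp_neg_Ioi]
    _ ≤ ∫ v in Ioi R, Real.exp (-v) * v ^ x := by
        refine setIntegral_mono_on ((integrableOn_exp_neg_Ioi R).const_mul _)
          (hint.mono_set (Ioi_subset_Ioi hR)) measurableSet_Ioi fun v hv => ?_
        rw [mul_comm]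
        gcongr
        exact (mem_Ioi.1 hv).le
    _ ≤ ∫ v in Ioi 0, Real.exp (-v) * v ^ x := by
        refine setIntegral_mono_set hint ?_ (Ioi_subset_Ioi hR).eventuallyLE
        filter_upwards [self_mem_ae_restrict measurableSet_Ioi] with v hv
        exact mul_nonneg (Real.exp_pos _).le (Real.rpow_nonneg (mem_Ioi.1 hv).le _)
    _ = Real.Gamma (x + 1) := by
        rw [Real.Gamma_eq_integral (by linarith), add_sub_cancel_right]

theorem Gamma_mul_natCast_add_one_pos (hα : 0 < α) (k : ℕ) : 0 < Real.Gamma (α * k + 1) :=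
  Real.Gamma_pos_of_pos (by positivity)

theorem summable_pow_div_Gamma (hα : 0 < α) (z : ℝ) :
    Summable fun k : ℕ => z ^ k / Real.Gamma (α * k + 1) := by
  -- With `R ^ α = 2 |z|` the lower bound on `Γ` makes the series geometric of ratio `1 / 2`.
  obtain ⟨R, hR0, hR⟩ : ∃ R : ℝ, 0 ≤ R ∧ R ^ α = 2 * |z| :=
    ⟨(2 * |z|) ^ α⁻¹, by positivity, Real.rpow_inv_rpow (by positivity) hα.ne'⟩
  refine Summable.of_norm_bounded (g := fun k : ℕ => Real.exp R * (1 / 2 : ℝ) ^ k)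
    (summable_geometric_two.mul_left _) fun k => ?_
  have hΓ := Gamma_mul_natCast_add_one_pos hα k
  have hGamma : (2 * |z|) ^ k * Real.exp (-R) ≤ Real.Gamma (α * k + 1) := by
    simpa only [Real.rpow_mul hR0, hR, Real.rpow_natCast] using
      rpow_mul_exp_neg_le_Gamma_add_one hR0 (show 0 ≤ α * k by positivity)
  rw [norm_div, norm_pow, Real.norm_eq_abs, Real.norm_of_nonneg hΓ.le, div_le_iff₀ hΓ]
  calc |z| ^ k = Real.exp R * (1 / 2) ^ k * ((2 * |z|) ^ k * Real.exp (-R)) := by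
        rw [Real.exp_neg, mul_pow, one_div, inv_pow]
        field_simp
    _ ≤ Real.exp R * (1 / 2) ^ k * Real.Gamma (α * k + 1) := by gcongr

theorem ML_pos (hα : 0 < α) {z : ℝ} (hz : 0 ≤ z) : 0 < ML α z :=
  (summable_pow_div_Gamma hα z).tsum_pos
    (fun k => div_nonneg (pow_nonneg hz k) (Gamma_mul_natCast_add_one_pos hα k).le) 0 (by simp)

theorem monotoneOn_ML (hα : 0 < α) : MonotoneOn (ML α) (Ici 0) := fun z hz w _ hzw =>
  (summable_pow_div_Gamma hα z).tsum_le_tsum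
    (fun k => div_le_div_of_nonneg_right (pow_le_pow_left₀ hz hzw k)
      (Gamma_mul_natCast_add_one_pos hα k).le) (summable_pow_div_Gamma hα w)

end MittagLeffler

section FixedPoint

variable {X E : Type*} [TopologicalSpace X] [NormedAddCommGroup E] [NormedSpace ℝ E]
  [CompleteSpace E]

theorem existsUnique_fixedPoint_of_norm_sub_le_mul [CompactSpace X] {q : ℝ} (hq0 : 0 ≤ q)
    (hq : q < 1) {w : C(X, ℝ)} (hw : ∀ t, 0 < w t) {T : C(X, E) → C(X, E)}
    (hT : ∀ x y D, (∀ t, ‖x t - y t‖ ≤ D * w t) → ∀ t, ‖T x t - T y t‖ ≤ q * D * w t) :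
    ∃! x, T x = x := by
  let winv : C(X, ℝ) := ⟨fun t => (w t)⁻¹, w.continuous.inv₀ fun t => (hw t).ne'⟩
  have smul_winv : ∀ x : C(X, E), w • winv • x = x := fun x =>
    ContinuousMap.ext fun t => smul_inv_smul₀ (hw t).ne' (x t)
  -- Conjugation by `w` turns the weighted norm into the supremum norm.
  have hcontr : ContractingWith ⟨q, hq0⟩ fun z : C(X, E) => winv • T (w • z) := by
    refine ⟨by exact_mod_cast hq, LipschitzWith.of_dist_le_mul fun z z' => ?_⟩
    refine (ContinuousMap.dist_le (by positivity)).2 fun t => ?_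
    have hzz' : ∀ s, ‖(w • z) s - (w • z') s‖ ≤ dist z z' * w s := fun s => by
      change ‖w s • z s - w s • z' s‖ ≤ _
      rw [← smul_sub, norm_smul, Real.norm_of_nonneg (hw s).le, mul_comm, ← dist_eq_norm]
      exact mul_le_mul_of_nonneg_right (ContinuousMap.dist_apply_le_dist s) (hw s).le
    change dist ((w t)⁻¹ • T (w • z) t) ((w t)⁻¹ • T (w • z') t) ≤ q * dist z z'
    rw [dist_eq_norm, ← smul_sub, norm_smul, norm_inv, Real.norm_of_nonneg (hw t).le,
      inv_mul_le_iff₀ (hw t), mul_comm (w t)]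
    exact hT _ _ _ hzz' t
  refine ⟨w • hcontr.fixedPoint, ?_, fun y hy => ?_⟩
  · exact (smul_winv _).symm.trans (congrArg (w • ·) hcontr.fixedPoint_isFixedPt)
  · have hfix : Function.IsFixedPt (fun z : C(X, E) => winv • T (w • z)) (winv • y) := by
      simp only [Function.IsFixedPt, smul_winv, hy]
    rw [← hcontr.fixedPoint_unique hfix, smul_winv]

theorem exists_unique_continuousOn_fixedPoint {s : Set X} (hs : IsCompact s) {q : ℝ}
    (hq0 : 0 ≤ q) (hq : q < 1) {w : X → ℝ} (hwc : ContinuousOn w s) (hw : ∀ t ∈ s, 0 < w t)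
    {Φ : (X → E) → X → E} (hΦc : ∀ x, ContinuousOn x s → ContinuousOn (Φ x) s)
    (hΦ : ∀ x y D, ContinuousOn x s → ContinuousOn y s →
      (∀ t ∈ s, ‖x t - y t‖ ≤ D * w t) → ∀ t ∈ s, ‖Φ x t - Φ y t‖ ≤ q * D * w t) :
    ∃ x, (ContinuousOn x s ∧ EqOn x (Φ x) s) ∧
      ∀ y, ContinuousOn y s ∧ EqOn y (Φ y) s → EqOn y x s := by
  have : CompactSpace s := isCompact_iff_compactSpace.1 hs
  let ext (z : C(s, E)) : X → E := Function.extend Subtype.val z 0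
  have ext_apply : ∀ (z : C(s, E)) (t : s), ext z t = z t := fun z t =>
    Subtype.val_injective.extend_apply _ _ _
  have continuousOn_ext : ∀ z, ContinuousOn (ext z) s := fun z =>
    continuousOn_iff_continuous_domRestrict.2 (z.continuous.congr fun t => (ext_apply z t).symm)
  let T (z : C(s, E)) : C(s, E) :=
    ⟨_, continuousOn_iff_continuous_domRestrict.1 (hΦc _ (continuousOn_ext z))⟩
  obtain ⟨z, hz, hzuniq⟩ := existsUnique_fixedPoint_of_norm_sub_le_mul hq0 hq
    (w := ⟨_, continuousOn_iff_continuous_domRestrict.1 hwc⟩) (fun t => hw t t.2) (T := T)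
    fun x y D hxy t => hΦ _ _ D (continuousOn_ext x) (continuousOn_ext y)
      (fun r hr => by
        rw [ext_apply x ⟨r, hr⟩, ext_apply y ⟨r, hr⟩]
        exact hxy ⟨r, hr⟩) t t.2
  refine ⟨ext z, ⟨continuousOn_ext z, fun t ht => ?_⟩, fun y ⟨hyc, hy⟩ t ht => ?_⟩
  · rw [ext_apply z ⟨t, ht⟩]
    exact congrArg (fun u : C(s, E) => u ⟨t, ht⟩) hz.symm
  · let y' : C(s, E) := ⟨_, continuousOn_iff_continuous_domRestrict.1 hyc⟩
    have hyy' : ∀ r ∈ s, ‖ext y' r - y r‖ ≤ 0 * w r := fun r hr => by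
      rw [ext_apply y' ⟨r, hr⟩, zero_mul]
      exact (norm_sub_eq_zero_iff.2 rfl).le
    have hy' : T y' = y' := ContinuousMap.ext fun r => by
      have := hΦ _ _ 0 (continuousOn_ext y') hyc hyy' r r.2
      rw [mul_zero, zero_mul, norm_le_zero_iff, sub_eq_zero, ← hy r.2] at this
      exact this
    rw [ext_apply z ⟨t, ht⟩, ← hzuniq y' hy']
    rfl

end FixedPoint

theorem continuousOn_setIntegral_smul {X Y E : Type*} [TopologicalSpace X]
    [FirstCountableTopology X] [TopologicalSpace Y] [MeasurableSpace Y] [OpensMeasurableSpace Y]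
    [SecondCountableTopology Y] [NormedAddCommGroup E] [NormedSpace ℝ E] {μ : Measure Y}
    {s : Set X} {K : Set Y} (hs : IsCompact s) (hK : IsCompact K) (hKm : MeasurableSet K)
    {κ : Y → ℝ} (hκ : IntegrableOn κ K μ) {G : X → Y → E}
    (hG : ContinuousOn (fun p : X × Y => G p.1 p.2) (s ×ˢ K)) :
    ContinuousOn (fun x => ∫ y in K, κ y • G x y ∂μ) s := by
  obtain ⟨C, hC⟩ := (hs.prod hK).exists_bound_of_continuousOn hG
  refine continuousOn_of_dominated (bound := fun y => ‖κ y‖ * C) (fun x hx => ?_)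
    (fun x hx => ?_) (hκ.norm.mul_const C) ?_
  · exact hκ.aestronglyMeasurable.smul
      ((hG.comp (f := fun y => (x, y)) (by fun_prop) fun y hy => ⟨hx, hy⟩).aestronglyMeasurable hKm)
  · filter_upwards [ae_restrict_mem hKm] with y hy
    rw [norm_smul]
    exact mul_le_mul_of_nonneg_left (hC (x, y) ⟨hx, hy⟩) (norm_nonneg _)
  · filter_upwards [ae_restrict_mem hKm] with y hy
    exact ContinuousOn.const_smul
      (hG.comp (f := fun x => (x, y)) (by fun_prop) fun x hx => ⟨hx, hy⟩) _

section Scale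

/-- The admissible scale functions of `ψ`-fractional calculus: `ψ` is strictly increasing and
continuous on `[a, b]` and differentiable in the interior. -/
structure IsScaleOn (ψ : ℝ → ℝ) (a b : ℝ) : Prop where
  strictMonoOn : StrictMonoOn ψ (Icc a b)
  continuousOn : ContinuousOn ψ (Icc a b)
  differentiableOn : DifferentiableOn ℝ ψ (Ioo a b)

namespace IsScaleOn

variable {ψ : ℝ → ℝ} {a b t : ℝ}

theorem mono (hψ : IsScaleOn ψ a b) (ht : t ∈ Icc a b) : IsScaleOn ψ a t where
  strictMonoOn := hψ.strictMonoOn.mono (Icc_subset_Icc_right ht.2)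
  continuousOn := hψ.continuousOn.mono (Icc_subset_Icc_right ht.2)
  differentiableOn := hψ.differentiableOn.mono (Ioo_subset_Ioo_right ht.2)

theorem left_le (hψ : IsScaleOn ψ a b) (ht : t ∈ Icc a b) : ψ a ≤ ψ t :=
  hψ.strictMonoOn.monotoneOn (left_mem_Icc.2 (ht.1.trans ht.2)) ht ht.1

theorem le_right (hψ : IsScaleOn ψ a b) (ht : t ∈ Icc a b) : ψ t ≤ ψ b :=
  hψ.strictMonoOn.monotoneOn ht (right_mem_Icc.2 (ht.1.trans ht.2)) ht.2

theorem image_Icc (hψ : IsScaleOn ψ a b) (hab : a ≤ b) : ψ '' Icc a b = Icc (ψ a) (ψ b) :=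
  hψ.continuousOn.image_Icc_of_monotoneOn hab hψ.strictMonoOn.monotoneOn

theorem hasDerivAt (hψ : IsScaleOn ψ a b) {s : ℝ} (hs : s ∈ Ioo a b) :
    HasDerivAt ψ (deriv ψ s) s :=
  (hψ.differentiableOn.differentiableAt (isOpen_Ioo.mem_nhds hs)).hasDerivAt

theorem deriv_nonneg (hψ : IsScaleOn ψ a b) {s : ℝ} (hs : s ∈ Ioo a b) : 0 ≤ deriv ψ s := by
  rw [← derivWithin_of_mem_nhds (isOpen_Ioo.mem_nhds hs)]
  exact (hψ.strictMonoOn.monotoneOn.mono Ioo_subset_Icc_self).derivWithin_nonneg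

theorem exists_leftInvOn_continuousOn (hψ : IsScaleOn ψ a b) (hab : a ≤ b) :
    ∃ φ : ℝ → ℝ, LeftInvOn φ ψ (Icc a b) ∧ ContinuousOn φ (Icc (ψ a) (ψ b)) := by
  have hinv := hψ.strictMonoOn.injOn.leftInvOn_invFunOn
  refine ⟨_, hinv, continuousOn_iff_isClosed.2 fun t ht => ⟨ψ '' (t ∩ Icc a b), ?_, ?_⟩⟩
  · exact ((isCompact_Icc.inter_left ht).image_of_continuousOn
      (hψ.continuousOn.mono inter_subset_right)).isClosed
  · rw [hinv.image_inter', hψ.image_Icc hab, inter_assoc, inter_self]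

end IsScaleOn

end Scale

section PsiIntegral

variable {E : Type*} [NormedAddCommGroup E] [NormedSpace ℝ E]
  {α a b t : ℝ} {ψ : ℝ → ℝ}

/-- The `ψ`-Riemann–Liouville integral `I_{a+}^{α,ψ} g (t)` of a function with values in a normed
space. Unlike `fracIntV` it has no separate value at order `0`. -/
noncomputable def psiIntegral (α : ℝ) (ψ : ℝ → ℝ) (a : ℝ) (g : ℝ → E) (t : ℝ) : E :=
  (Real.Gamma α)⁻¹ • ∫ s in a..t, (deriv ψ s * (ψ t - ψ s) ^ (α - 1)) • g s

theorem fracIntV_eq_psiIntegral {n : ℕ} (hα : α ≠ 0) (ψ : ℝ → ℝ) (a : ℝ)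
    (g : ℝ → EuclideanSpace ℝ (Fin n)) (t : ℝ) : fracIntV α ψ a g t = psiIntegral α ψ a g t :=
  if_neg hα

theorem psiIntegral_congr {g h : ℝ → E} (hat : a ≤ t) (hgh : EqOn g h (Icc a t)) :
    psiIntegral α ψ a g t = psiIntegral α ψ a h t := by
  refine congrArg (_ • ·) (intervalIntegral.integral_congr fun s hs => ?_)
  rw [uIcc_of_le hat] at hs
  simp only [hgh hs]

theorem psiIntegral_comp (hψ : IsScaleOn ψ a t) (hat : a ≤ t) (G : ℝ → E) :
    psiIntegral α ψ a (G ∘ ψ) t =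
      (Real.Gamma α)⁻¹ • ∫ v in (0 : ℝ)..(ψ t - ψ a), v ^ (α - 1) • G (ψ t - v) := by
  have hψat : ψ a ≤ ψ t := hψ.left_le (right_mem_Icc.2 hat)
  refine congrArg (_ • ·) ?_
  calc ∫ s in a..t, (deriv ψ s * (ψ t - ψ s) ^ (α - 1)) • G (ψ s)
      = ∫ s in Icc a t, deriv ψ s • (ψ t - ψ s) ^ (α - 1) • G (ψ s) := by
        simp only [intervalIntegral.integral_of_le hat, integral_Icc_eq_integral_Ioc, smul_smul]
    _ = ∫ y in Icc (ψ a) (ψ t), (ψ t - y) ^ (α - 1) • G y :=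
        integral_Icc_deriv_smul_of_deriv_nonneg (g := fun y => (ψ t - y) ^ (α - 1) • G y)
          hψ.continuousOn (fun _ => hψ.hasDerivAt) (fun _ => hψ.deriv_nonneg) hat
    _ = ∫ y in (ψ a)..(ψ t), (ψ t - y) ^ (α - 1) • G y := by
        rw [intervalIntegral.integral_of_le hψat, integral_Icc_eq_integral_Ioc]
    _ = ∫ v in (0 : ℝ)..(ψ t - ψ a), v ^ (α - 1) • G (ψ t - v) := by
        simpa only [sub_self, sub_sub_cancel] using intervalIntegral.integral_comp_sub_left
          (a := ψ a) (b := ψ t) (fun v => v ^ (α - 1) • G (ψ t - v)) (ψ t)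

theorem integral_rpow_smul_eq_rpow_smul_integral (hα : 0 < α) {τ : ℝ} (hτ : 0 ≤ τ) (H : ℝ → E) :
    ∫ v in (0 : ℝ)..τ, v ^ (α - 1) • H v =
      τ ^ α • ∫ u in Icc (0 : ℝ) 1, u ^ (α - 1) • H (τ * u) := by
  rw [integral_Icc_eq_integral_Ioc, ← intervalIntegral.integral_of_le zero_le_one]
  rcases hτ.eq_or_lt with rfl | hτ
  · rw [Real.zero_rpow hα.ne', zero_smul, intervalIntegral.integral_same]
  · calc ∫ v in (0 : ℝ)..τ, v ^ (α - 1) • H v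
        = τ • ∫ u in (0 : ℝ)..1, (τ * u) ^ (α - 1) • H (τ * u) := by
          rw [intervalIntegral.smul_integral_comp_mul_left fun v => v ^ (α - 1) • H v, mul_zero,
            mul_one]
      _ = τ • ∫ u in (0 : ℝ)..1, τ ^ (α - 1) • u ^ (α - 1) • H (τ * u) := by
          refine congrArg (τ • ·) (intervalIntegral.integral_congr fun u hu => ?_)
          rw [uIcc_of_le zero_le_one] at hu
          simp only [Real.mul_rpow hτ.le hu.1, smul_smul]
      _ = τ ^ α • ∫ u in (0 : ℝ)..1, u ^ (α - 1) • H (τ * u) := by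
          rw [intervalIntegral.integral_smul, smul_smul,
            ← Real.rpow_one_add' hτ.le (by simpa using hα.ne'), add_sub_cancel]

theorem psiIntegral_eq_rpow_smul_setIntegral (hα : 0 < α) (hψ : IsScaleOn ψ a t) (hat : a ≤ t)
    {φ : ℝ → ℝ} (hφ : LeftInvOn φ ψ (Icc a t)) (g : ℝ → E) :
    psiIntegral α ψ a g t = (Real.Gamma α)⁻¹ • (ψ t - ψ a) ^ α •
      ∫ u in Icc (0 : ℝ) 1, u ^ (α - 1) • g (φ (ψ t - (ψ t - ψ a) * u)) := by
  rw [← integral_rpow_smul_eq_rpow_smul_integral hα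
      (sub_nonneg.2 (hψ.left_le (right_mem_Icc.2 hat))) fun v => g (φ (ψ t - v)),
    ← psiIntegral_comp hψ hat fun y => g (φ y)]
  exact psiIntegral_congr hat fun s hs => (congrArg g (hφ hs)).symm

theorem continuousOn_psiIntegral_param (hα : 0 < α) (hψ : IsScaleOn ψ a b) {g : ℝ → ℝ → E}
    (hg : ContinuousOn (fun p : ℝ × ℝ => g p.1 p.2) {p | p.1 ∈ Icc a b ∧ p.2 ∈ Icc a p.1}) :
    ContinuousOn (fun t => psiIntegral α ψ a (g t) t) (Icc a b) := by
  rcases lt_or_ge b a with hba | hab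
  · rw [Icc_eq_empty hba.not_ge]
    exact continuousOn_empty _
  obtain ⟨φ, hφ, hφc⟩ := hψ.exists_leftInvOn_continuousOn hab
  let y (p : ℝ × ℝ) : ℝ := ψ p.1 - (ψ p.1 - ψ a) * p.2
  have hy : ∀ p ∈ Icc a b ×ˢ Icc (0 : ℝ) 1, y p ∈ Icc (ψ a) (ψ p.1) := fun p hp => by
    have := hψ.left_le hp.1
    constructor <;> simp only [y] <;> nlinarith [hp.2.1, hp.2.2]
  have hyc : ContinuousOn y (Icc a b ×ˢ Icc (0 : ℝ) 1) := by
    have : ContinuousOn (fun p : ℝ × ℝ => ψ p.1) (Icc a b ×ˢ Icc (0 : ℝ) 1) :=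
      hψ.continuousOn.comp continuousOn_fst fun p hp => hp.1
    exact this.sub ((this.sub continuousOn_const).mul continuousOn_snd)
  have hφy : ∀ p ∈ Icc a b ×ˢ Icc (0 : ℝ) 1, φ (y p) ∈ Icc a p.1 := fun p hp => by
    obtain ⟨s, hs, hsy⟩ := ((hψ.mono hp.1).image_Icc hp.1.1).ge (hy p hp)
    rwa [← hsy, hφ (Icc_subset_Icc_right hp.1.2 hs)]
  have hgc : ContinuousOn (fun p : ℝ × ℝ => g p.1 (φ (y p))) (Icc a b ×ˢ Icc (0 : ℝ) 1) :=
    hg.comp (continuousOn_fst.prodMk (hφc.comp hyc fun p hp =>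
      ⟨(hy p hp).1, (hy p hp).2.trans (hψ.le_right hp.1)⟩)) fun p hp => ⟨hp.1, hφy p hp⟩
  have hκ : IntegrableOn (fun u : ℝ => u ^ (α - 1)) (Icc 0 1) :=
    (intervalIntegrable_iff_integrableOn_Icc_of_le zero_le_one).1
      (intervalIntegral.intervalIntegrable_rpow' (by linarith))
  have hpow : ContinuousOn (fun t => (ψ t - ψ a) ^ α) (Icc a b) :=
    (hψ.continuousOn.sub continuousOn_const).rpow_const fun _ _ => .inr hα.le
  refine ((hpow.smul (continuousOn_setIntegral_smul isCompact_Icc isCompact_Icc measurableSet_Icc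
    hκ (G := fun t u => g t (φ (y (t, u)))) hgc)).const_smul (Real.Gamma α)⁻¹).congr fun t ht => ?_
  exact psiIntegral_eq_rpow_smul_setIntegral hα (hψ.mono ht) ht.1
    (hφ.mono (Icc_subset_Icc_right ht.2)) (g t)

theorem continuousOn_psiIntegral (hα : 0 < α) (hψ : IsScaleOn ψ a b) {g : ℝ → E}
    (hg : ContinuousOn g (Icc a b)) : ContinuousOn (psiIntegral α ψ a g) (Icc a b) :=
  continuousOn_psiIntegral_param hα hψ
    (hg.comp continuousOn_snd fun _ hp => Icc_subset_Icc_right hp.1.2 hp.2)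

theorem intervalIntegrable_psiKernel (hα : 0 < α) (hψ : IsScaleOn ψ a t) (hat : a ≤ t) :
    IntervalIntegrable (fun s => deriv ψ s * (ψ t - ψ s) ^ (α - 1)) volume a t := by
  have hψat : ψ a ≤ ψ t := hψ.left_le (right_mem_Icc.2 hat)
  have hrpow : IntervalIntegrable (fun y => (ψ t - y) ^ (α - 1)) volume (ψ a) (ψ t) := by
    simpa only [sub_sub_cancel, sub_zero] using
      ((intervalIntegral.intervalIntegrable_rpow' (a := 0) (b := ψ t - ψ a)
        (show -1 < α - 1 by linarith)).comp_sub_left (ψ t)).symm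
  rw [intervalIntegrable_iff_integrableOn_Icc_of_le hψat] at hrpow
  rw [intervalIntegrable_iff_integrableOn_Icc_of_le hat]
  exact (integrableOn_Icc_deriv_smul_iff_of_deriv_nonneg hψ.continuousOn (fun _ => hψ.hasDerivAt)
    (fun _ => hψ.deriv_nonneg) hat).2 hrpow

theorem intervalIntegrable_psiKernel_smul (hα : 0 < α) (hψ : IsScaleOn ψ a t) (hat : a ≤ t)
    {g : ℝ → E} (hg : ContinuousOn g (Icc a t)) :
    IntervalIntegrable (fun s => (deriv ψ s * (ψ t - ψ s) ^ (α - 1)) • g s) volume a t :=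
  (intervalIntegrable_psiKernel hα hψ hat).smul_continuousOn (by rwa [uIcc_of_le hat])

theorem psiIntegral_sub (hα : 0 < α) (hψ : IsScaleOn ψ a t) (hat : a ≤ t) {g h : ℝ → E}
    (hg : ContinuousOn g (Icc a t)) (hh : ContinuousOn h (Icc a t)) :
    psiIntegral α ψ a g t - psiIntegral α ψ a h t = psiIntegral α ψ a (fun s => g s - h s) t := by
  simp only [psiIntegral, smul_sub]
  rw [intervalIntegral.integral_sub (intervalIntegrable_psiKernel_smul hα hψ hat hg)
    (intervalIntegrable_psiKernel_smul hα hψ hat hh), smul_sub]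

theorem norm_psiIntegral_le_psiIntegral (hα : 0 < α) (hψ : IsScaleOn ψ a t) (hat : a ≤ t)
    {g : ℝ → E} {h : ℝ → ℝ} (hh : ContinuousOn h (Icc a t)) (hgh : ∀ s ∈ Icc a t, ‖g s‖ ≤ h s) :
    ‖psiIntegral α ψ a g t‖ ≤ psiIntegral α ψ a h t := by
  have hΓ := (Real.Gamma_pos_of_pos hα).le
  rw [psiIntegral, norm_smul, norm_inv, Real.norm_of_nonneg hΓ]
  refine mul_le_mul_of_nonneg_left (intervalIntegral.norm_integral_le_of_norm_le hat ?_
    (intervalIntegrable_psiKernel_smul hα hψ hat hh)) (inv_nonneg.2 hΓ)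
  filter_upwards [compl_mem_ae_iff.2 (measure_singleton t)] with s hst hs
  have hs' : s ∈ Ioo a t := ⟨hs.1, hs.2.lt_of_ne hst⟩
  have hker : 0 ≤ deriv ψ s * (ψ t - ψ s) ^ (α - 1) := mul_nonneg (hψ.deriv_nonneg hs')
    (Real.rpow_nonneg (sub_nonneg.2 (hψ.le_right (Ioo_subset_Icc_self hs'))) _)
  rw [norm_smul, Real.norm_of_nonneg hker]
  exact mul_le_mul_of_nonneg_left (hgh s (Ioo_subset_Icc_self hs')) hker

theorem integral_rpow_mul_exp_neg_mul_le (hα : 0 < α) {r τ : ℝ} (hr : 0 < r) (hτ : 0 ≤ τ) :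
    ∫ v in (0 : ℝ)..τ, v ^ (α - 1) * Real.exp (-(r * v)) ≤ r ^ (-α) * Real.Gamma α := by
  have hIoi : ∫ v in Ioi 0, v ^ (α - 1) * Real.exp (-(r * v)) = r ^ (-α) * Real.Gamma α := by
    rw [Real.integral_rpow_mul_exp_neg_mul_Ioi hα hr, one_div, Real.inv_rpow hr.le,
      ← Real.rpow_neg hr.le]
  have hpos : 0 < r ^ (-α) * Real.Gamma α :=
    mul_pos (Real.rpow_pos_of_pos hr _) (Real.Gamma_pos_of_pos hα)
  rw [← hIoi, intervalIntegral.integral_of_le hτ]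
  refine setIntegral_mono_set (.of_integral_ne_zero (hIoi ▸ hpos.ne')) ?_
    Ioc_subset_Ioi_self.eventuallyLE
  filter_upwards [self_mem_ae_restrict measurableSet_Ioi] with v hv
  exact mul_nonneg (Real.rpow_nonneg (mem_Ioi.1 hv).le _) (Real.exp_pos _).le

theorem psiIntegral_exp_le (hα : 0 < α) (hψ : IsScaleOn ψ a t) (hat : a ≤ t) {r C : ℝ}
    (hr : 0 < r) (hC : 0 ≤ C) :
    psiIntegral α ψ a (fun s => C * Real.exp (r * (ψ s - ψ a))) t ≤
      r ^ (-α) * C * Real.exp (r * (ψ t - ψ a)) := by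
  have hexp : ∀ v, Real.exp (r * (ψ t - v - ψ a)) =
      Real.exp (r * (ψ t - ψ a)) * Real.exp (-(r * v)) := fun v => by
    rw [← Real.exp_add]
    ring_nf
  calc psiIntegral α ψ a (fun s => C * Real.exp (r * (ψ s - ψ a))) t
      = (Real.Gamma α)⁻¹ * ∫ v in (0 : ℝ)..(ψ t - ψ a),
          v ^ (α - 1) * (C * Real.exp (r * (ψ t - v - ψ a))) :=
        psiIntegral_comp hψ hat fun y => C * Real.exp (r * (y - ψ a))
    _ = (Real.Gamma α)⁻¹ * (C * Real.exp (r * (ψ t - ψ a)) *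
          ∫ v in (0 : ℝ)..(ψ t - ψ a), v ^ (α - 1) * Real.exp (-(r * v))) := by
        rw [← intervalIntegral.integral_const_mul (C * _)]
        refine congrArg (_ * ·) (intervalIntegral.integral_congr fun v _ => ?_)
        simp only [hexp]
        ring
    _ ≤ (Real.Gamma α)⁻¹ * (C * Real.exp (r * (ψ t - ψ a)) * (r ^ (-α) * Real.Gamma α)) := by
        gcongr
        exact integral_rpow_mul_exp_neg_mul_le hα hr
          (sub_nonneg.2 (hψ.left_le (right_mem_Icc.2 hat)))
    _ = r ^ (-α) * C * Real.exp (r * (ψ t - ψ a)) := by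
        field_simp

theorem norm_psiIntegral_le_of_norm_le_exp (hα : 0 < α) (hψ : IsScaleOn ψ a t) (hat : a ≤ t)
    {g : ℝ → E} {r C : ℝ} (hr : 0 < r)
    (hg : ∀ s ∈ Icc a t, ‖g s‖ ≤ C * Real.exp (r * (ψ s - ψ a))) :
    ‖psiIntegral α ψ a g t‖ ≤ r ^ (-α) * C * Real.exp (r * (ψ t - ψ a)) := by
  have hC : 0 ≤ C := by
    simpa only [sub_self, mul_zero, Real.exp_zero, mul_one] using
      (norm_nonneg _).trans (hg a (left_mem_Icc.2 hat))
  refine (norm_psiIntegral_le_psiIntegral hα hψ hat ?_ hg).trans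
    (psiIntegral_exp_le hα hψ hat hr hC)
  have := hψ.continuousOn
  fun_prop

end PsiIntegral

section HilferEquation

variable {E F : Type*} [NormedAddCommGroup E] [NormedAddCommGroup F] [NormedSpace ℝ F]
  {α a b : ℝ} {ψ : ℝ → ℝ} {f : ℝ → E → F → E} {k : ℝ → ℝ → E → F}

/-- The right-hand side `s ↦ f(s, x(s), (1/Γ(α)) ∫_a^s ψ'(r)(ψ(s)-ψ(r))^{α-1} k(s, r, x(r)) dr)` of
the `ψ`-Hilfer integrodifferential equation along a curve `x`. -/
noncomputable def hilferRHS (α : ℝ) (ψ : ℝ → ℝ) (a : ℝ) (f : ℝ → E → F → E) (k : ℝ → ℝ → E → F)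
    (x : ℝ → E) (s : ℝ) : E :=
  f s (x s) (psiIntegral α ψ a (fun r => k s r (x r)) s)

theorem continuousOn_hilferRHS (hα : 0 < α) (hψ : IsScaleOn ψ a b)
    (hf : ContinuousOn (fun p : ℝ × E × F => f p.1 p.2.1 p.2.2) (Icc a b ×ˢ univ))
    (hk : ContinuousOn (fun p : ℝ × ℝ × E => k p.1 p.2.1 p.2.2)
      {p | p.1 ∈ Icc a b ∧ p.2.1 ∈ Icc a p.1})
    {x : ℝ → E} (hx : ContinuousOn x (Icc a b)) :
    ContinuousOn (hilferRHS α ψ a f k x) (Icc a b) := by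
  have hkx : ContinuousOn (fun p : ℝ × ℝ => k p.1 p.2 (x p.2))
      {p | p.1 ∈ Icc a b ∧ p.2 ∈ Icc a p.1} :=
    hk.comp (continuousOn_fst.prodMk (continuousOn_snd.prodMk
      (hx.comp continuousOn_snd fun p hp => Icc_subset_Icc_right hp.1.2 hp.2))) fun p hp => hp
  exact hf.comp (continuousOn_id.prodMk (hx.prodMk (continuousOn_psiIntegral_param hα hψ hkx)))
    fun s hs => ⟨hs, mem_univ _⟩

theorem norm_hilferRHS_sub_le {L M r D : ℝ} (hα : 0 < α) (hψ : IsScaleOn ψ a b) (hM : 0 ≤ M)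
    (hL : 0 ≤ L) (hr : 0 < r)
    (hk : ContinuousOn (fun p : ℝ × ℝ × E => k p.1 p.2.1 p.2.2)
      {p | p.1 ∈ Icc a b ∧ p.2.1 ∈ Icc a p.1})
    (hfLip : ∀ t ∈ Icc a b, ∀ u v u' v', ‖f t u v - f t u' v'‖ ≤ M * (‖u - u'‖ + ‖v - v'‖))
    (hkLip : ∀ t ∈ Icc a b, ∀ s ∈ Icc a t, ∀ u u', ‖k t s u - k t s u'‖ ≤ L * ‖u - u'‖)
    {x y : ℝ → E} (hx : ContinuousOn x (Icc a b)) (hy : ContinuousOn y (Icc a b))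
    (hxy : ∀ t ∈ Icc a b, ‖x t - y t‖ ≤ D * Real.exp (r * (ψ t - ψ a))) {t : ℝ}
    (ht : t ∈ Icc a b) :
    ‖hilferRHS α ψ a f k x t - hilferRHS α ψ a f k y t‖ ≤
      M * (1 + L * r ^ (-α)) * D * Real.exp (r * (ψ t - ψ a)) := by
  have hsub : Icc a t ⊆ Icc a b := Icc_subset_Icc_right ht.2
  have hkc : ∀ z : ℝ → E, ContinuousOn z (Icc a b) →
      ContinuousOn (fun s => k t s (z s)) (Icc a t) := fun z hz =>
    hk.comp (continuousOn_const.prodMk (continuousOn_id.prodMk (hz.mono hsub)))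
      fun s hs => ⟨ht, hs⟩
  have hvolterra : ‖psiIntegral α ψ a (fun s => k t s (x s)) t -
      psiIntegral α ψ a (fun s => k t s (y s)) t‖ ≤
        r ^ (-α) * (L * D) * Real.exp (r * (ψ t - ψ a)) := by
    rw [psiIntegral_sub hα (hψ.mono ht) ht.1 (hkc x hx) (hkc y hy)]
    refine norm_psiIntegral_le_of_norm_le_exp hα (hψ.mono ht) ht.1 hr fun s hs => ?_
    rw [mul_assoc]
    exact (hkLip t ht s hs _ _).trans (mul_le_mul_of_nonneg_left (hxy s (hsub hs)) hL)
  calc ‖hilferRHS α ψ a f k x t - hilferRHS α ψ a f k y t‖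
      ≤ M * (D * Real.exp (r * (ψ t - ψ a)) +
          r ^ (-α) * (L * D) * Real.exp (r * (ψ t - ψ a))) :=
        (hfLip t ht _ _ _ _).trans
          (mul_le_mul_of_nonneg_left (add_le_add (hxy t ht) hvolterra) hM)
    _ = M * (1 + L * r ^ (-α)) * D * Real.exp (r * (ψ t - ψ a)) := by ring

theorem exists_rpow_neg_mul_lt_one (hα : 0 < α) (L M : ℝ) :
    ∃ r : ℝ, 0 < r ∧ r ^ (-α) * (M * (1 + L * r ^ (-α))) < 1 := by
  have hrpow := tendsto_rpow_neg_atTop hα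
  have hlim : Tendsto (fun r : ℝ => r ^ (-α) * (M * (1 + L * r ^ (-α)))) atTop (𝓝 0) := by
    simpa only [zero_mul] using hrpow.mul (((hrpow.const_mul L).const_add 1).const_mul M)
  exact ((eventually_gt_atTop 0).and (hlim.eventually_lt_const one_pos)).exists

theorem exists_unique_eq_add_psiIntegral_hilferRHS [NormedSpace ℝ E] [CompleteSpace E] {L M : ℝ}
    (hα : 0 < α) (hψ : IsScaleOn ψ a b) (hL : 0 ≤ L) (hM : 0 ≤ M)
    (hf : ContinuousOn (fun p : ℝ × E × F => f p.1 p.2.1 p.2.2) (Icc a b ×ˢ univ))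
    (hk : ContinuousOn (fun p : ℝ × ℝ × E => k p.1 p.2.1 p.2.2)
      {p | p.1 ∈ Icc a b ∧ p.2.1 ∈ Icc a p.1})
    (hfLip : ∀ t ∈ Icc a b, ∀ u v u' v', ‖f t u v - f t u' v'‖ ≤ M * (‖u - u'‖ + ‖v - v'‖))
    (hkLip : ∀ t ∈ Icc a b, ∀ s ∈ Icc a t, ∀ u u', ‖k t s u - k t s u'‖ ≤ L * ‖u - u'‖)
    {g : ℝ → E} (hg : ContinuousOn g (Icc a b)) :
    ∃ x, (ContinuousOn x (Icc a b) ∧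
        EqOn x (fun t => g t + psiIntegral α ψ a (hilferRHS α ψ a f k x) t) (Icc a b)) ∧
      ∀ y, ContinuousOn y (Icc a b) ∧
        EqOn y (fun t => g t + psiIntegral α ψ a (hilferRHS α ψ a f k y) t) (Icc a b) →
      EqOn y x (Icc a b) := by
  obtain ⟨r, hr, hq⟩ := exists_rpow_neg_mul_lt_one hα L M
  have hwc : ContinuousOn (fun t => Real.exp (r * (ψ t - ψ a))) (Icc a b) := by
    have := hψ.continuousOn
    fun_prop
  have hrhs : ∀ x, ContinuousOn x (Icc a b) → ContinuousOn (hilferRHS α ψ a f k x) (Icc a b) :=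
    fun x hx => continuousOn_hilferRHS hα hψ hf hk hx
  refine exists_unique_continuousOn_fixedPoint isCompact_Icc (by positivity) hq hwc
    (fun t _ => Real.exp_pos _)
    (Φ := fun x t => g t + psiIntegral α ψ a (hilferRHS α ψ a f k x) t)
    (fun x hx => hg.add (continuousOn_psiIntegral hα hψ (hrhs x hx)))
    fun x y D hx hy hxy t ht => ?_
  have hsub : Icc a t ⊆ Icc a b := Icc_subset_Icc_right ht.2
  rw [add_sub_add_left_eq_sub, psiIntegral_sub hα (hψ.mono ht) ht.1 ((hrhs x hx).mono hsub)
    ((hrhs y hy).mono hsub), mul_assoc (r ^ (-α))]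
  exact norm_psiIntegral_le_of_norm_le_exp hα (hψ.mono ht) ht.1 hr fun s hs =>
    norm_hilferRHS_sub_le hα hψ hM hL hr hk hfLip hkLip hx hy hxy (hsub hs)

end HilferEquation

section ForcingTerm

variable {E : Type*} [NormedAddCommGroup E]

theorem exists_norm_le_of_bddAbove_norm_sub_div {X : Type*} [TopologicalSpace X] {s : Set X}
    (hs : IsCompact s) {u v : X → E} (hv : ContinuousOn v s) {w : X → ℝ} {W : ℝ}
    (hw : ∀ t ∈ s, 0 < w t) (hwW : ∀ t ∈ s, w t ≤ W)
    (hbdd : BddAbove ((fun t => ‖u t - v t‖ / w t) '' s)) : ∃ C, ∀ t ∈ s, ‖u t‖ ≤ C := by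
  obtain ⟨N, hN⟩ := hs.exists_bound_of_continuousOn hv
  obtain ⟨B, hB⟩ := hbdd
  refine ⟨B * W + N, fun t ht => ?_⟩
  have hBt : ‖u t - v t‖ / w t ≤ B := hB (mem_image_of_mem _ ht)
  have hB0 : 0 ≤ B := (div_nonneg (norm_nonneg _) (hw t ht).le).trans hBt
  calc ‖u t‖ = ‖u t - v t + v t‖ := by rw [sub_add_cancel]
    _ ≤ B * w t + N := (norm_add_le _ _).trans
        (add_le_add ((div_le_iff₀ (hw t ht)).1 hBt) (hN t ht))
    _ ≤ B * W + N := by gcongr; exact hwW t ht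

variable [NormedSpace ℝ E] {a b p : ℝ} {ψ : ℝ → ℝ} {x : E}

theorem nonneg_or_eq_zero_of_norm_rpow_smul_le {T C : ℝ} (hT : 0 < T)
    (hC : ∀ τ ∈ Ioc 0 T, ‖τ ^ p • x‖ ≤ C) : 0 ≤ p ∨ x = 0 := by
  by_contra! ⟨hp, hx⟩
  have hlim : Tendsto (fun τ : ℝ => τ ^ p * ‖x‖) (𝓝[>] 0) atTop :=
    (tendsto_rpow_neg_nhdsGT_zero hp).atTop_mul_const (norm_pos_iff.2 hx)
  obtain ⟨τ, hτ, hτC⟩ :=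
    ((hlim.eventually_gt_atTop C).and (Ioc_mem_nhdsGT hT)).exists
  refine (hC τ hτC).not_gt ?_
  rwa [norm_smul, Real.norm_of_nonneg (Real.rpow_nonneg hτC.1.le _)]

theorem continuousOn_sub_rpow_smul (hψ : ContinuousOn ψ (Icc a b)) (hx : 0 ≤ p ∨ x = 0) :
    ContinuousOn (fun t => (ψ t - ψ a) ^ p • x) (Icc a b) := by
  rcases hx with hp | rfl
  · exact ((hψ.sub continuousOn_const).rpow_const fun _ _ => .inr hp).smul continuousOn_const
  · simpa only [smul_zero] using continuousOn_const

theorem IsScaleOn.nonneg_or_eq_zero_of_bddAbove_div_ML {α ξ : ℝ} (hα : 0 < α) (hξ : 0 ≤ ξ)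
    (hψ : IsScaleOn ψ a b) (hab : a < b) {v : ℝ → E} (hv : ContinuousOn v (Icc a b))
    (hbdd : BddAbove ((fun t => ‖(ψ t - ψ a) ^ p • x - v t‖ / ML α (ξ * (ψ t - ψ a) ^ α)) ''
      Icc a b)) : 0 ≤ p ∨ x = 0 := by
  have hψa : ∀ t ∈ Icc a b, 0 ≤ ψ t - ψ a := fun t ht => sub_nonneg.2 (hψ.left_le ht)
  have hz : ∀ t ∈ Icc a b, 0 ≤ ξ * (ψ t - ψ a) ^ α := fun t ht =>
    mul_nonneg hξ (Real.rpow_nonneg (hψa t ht) _)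
  obtain ⟨C, hC⟩ := exists_norm_le_of_bddAbove_norm_sub_div isCompact_Icc hv
    (W := ML α (ξ * (ψ b - ψ a) ^ α)) (fun t ht => ML_pos hα (hz t ht))
    (fun t ht => monotoneOn_ML hα (hz t ht) (hz b (right_mem_Icc.2 hab.le)) <| by
      have := hψa t ht
      gcongr
      exact hψ.le_right ht) hbdd
  refine nonneg_or_eq_zero_of_norm_rpow_smul_le (T := ψ b - ψ a) (C := C) (sub_pos.2
    (hψ.strictMonoOn (left_mem_Icc.2 hab.le) (right_mem_Icc.2 hab.le) hab)) fun τ hτ => ?_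
  obtain ⟨t, ht, hψt⟩ := (hψ.image_Icc hab.le).ge
    (show ψ a + τ ∈ Icc (ψ a) (ψ b) from ⟨by linarith [hτ.1], by linarith [hτ.2]⟩)
  simpa only [hψt, add_sub_cancel_left] using hC t ht

end ForcingTerm

theorem hilfer_integrodifferential_existence_uniqueness_general
    {E F : Type*} [NormedAddCommGroup E] [NormedSpace ℝ E] [CompleteSpace E]
    [NormedAddCommGroup F] [NormedSpace ℝ F] [CompleteSpace F]
    {a b η α L M ξ : ℝ} {ψ : ℝ → ℝ} {f : ℝ → E → F → E} {k : ℝ → ℝ → E → F} {c : E}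
    (hα : 0 < α) (hab : a < b) (hψ : IsScaleOn ψ a b)
    (hL : 0 ≤ L) (hM : 0 ≤ M) (hξ : 0 ≤ ξ)
    (hf : ContinuousOn (fun p : ℝ × E × F => f p.1 p.2.1 p.2.2) (Icc a b ×ˢ univ))
    (hk : ContinuousOn (fun p : ℝ × ℝ × E => k p.1 p.2.1 p.2.2)
      {p | p.1 ∈ Icc a b ∧ p.2.1 ∈ Icc a p.1})
    (hfLip : ∀ t ∈ Icc a b, ∀ u v u' v', ‖f t u v - f t u' v'‖ ≤ M * (‖u - u'‖ + ‖v - v'‖))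
    (hkLip : ∀ t ∈ Icc a b, ∀ s ∈ Icc a t, ∀ u u', ‖k t s u - k t s u'‖ ≤ L * ‖u - u'‖)
    (hd2 : BddAbove ((fun t =>
      ‖(ψ t - ψ a) ^ η • c - psiIntegral α ψ a (hilferRHS α ψ a f k fun _ => 0) t‖
        / ML α (ξ * (ψ t - ψ a) ^ α)) '' Icc a b)) :
    ∃ x : ℝ → E,
      (ContinuousOn x (Icc a b) ∧ ∀ t ∈ Ioc a b,
        x t = (ψ t - ψ a) ^ η • c + psiIntegral α ψ a (hilferRHS α ψ a f k x) t) ∧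
      ∀ y : ℝ → E,
        (ContinuousOn y (Icc a b) ∧ ∀ t ∈ Ioc a b,
          y t = (ψ t - ψ a) ^ η • c + psiIntegral α ψ a (hilferRHS α ψ a f k y) t) →
        EqOn y x (Icc a b) := by
  have hI : ∀ x, ContinuousOn x (Icc a b) →
      ContinuousOn (psiIntegral α ψ a (hilferRHS α ψ a f k x)) (Icc a b) := fun x hx =>
    continuousOn_psiIntegral hα hψ (continuousOn_hilferRHS hα hψ hf hk hx)
  have hg : ContinuousOn (fun t => (ψ t - ψ a) ^ η • c) (Icc a b) :=
    continuousOn_sub_rpow_smul hψ.continuousOn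
      (hψ.nonneg_or_eq_zero_of_bddAbove_div_ML hα hξ hab (hI _ continuousOn_const) hd2)
  obtain ⟨x, ⟨hxc, hx⟩, hxuniq⟩ :=
    exists_unique_eq_add_psiIntegral_hilferRHS hα hψ hL hM hf hk hfLip hkLip hg
  refine ⟨x, ⟨hxc, hx.mono Ioc_subset_Icc_self⟩, fun y ⟨hyc, hy⟩ => hxuniq y ⟨hyc, ?_⟩⟩
  exact EqOn.of_subset_closure hy hyc (hg.add (hI y hyc)) Ioc_subset_Icc_self
    (closure_Ioc hab.ne).ge

theorem hilfer_integrodifferential_existence_uniqueness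
    (n : ℕ) (a b α β γ L M δ ξ : ℝ) (ψ : ℝ → ℝ)
    (f : ℝ → EuclideanSpace ℝ (Fin n) → EuclideanSpace ℝ (Fin n) → EuclideanSpace ℝ (Fin n))
    (k : ℝ → ℝ → EuclideanSpace ℝ (Fin n) → EuclideanSpace ℝ (Fin n))
    (x₀ : EuclideanSpace ℝ (Fin n))
    (hα0 : 0 < α) (hα1 : α ≤ 1) (hβ0 : 0 ≤ β) (hβ1 : β ≤ 1)
    (hγ : γ = α + β * (1 - α)) (hab : a < b)
    (hmono : StrictMonoOn ψ (Icc a b)) (hC1 : ContDiffOn ℝ 1 ψ (Icc a b))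
    (hL : 0 < L) (hM : 0 ≤ M) (hδ : 1 < δ) (hξ : ξ = L * δ)
    (hf : Continuous fun p : ℝ × EuclideanSpace ℝ (Fin n) × EuclideanSpace ℝ (Fin n) =>
      f p.1 p.2.1 p.2.2)
    (hk : Continuous fun p : ℝ × ℝ × EuclideanSpace ℝ (Fin n) => k p.1 p.2.1 p.2.2)
    (hfLip : ∀ t u v u' v', ‖f t u v - f t u' v'‖ ≤ M * (‖u - u'‖ + ‖v - v'‖))
    (hkLip : ∀ t s u u', ‖k t s u - k t s u'‖ ≤ L * ‖u - u'‖)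
    (hd2 : BddAbove ((fun t =>
      ‖((ψ t - ψ a) ^ (γ - 1) / Real.Gamma γ) • x₀
        - fracIntV α ψ a (fun s => f s 0 (volterraK α ψ a k (fun _ => 0) s)) t‖
        / ML α (ξ * (ψ t - ψ a) ^ α)) '' Icc a b))
    (hcontr : M / ξ * (1 + 1 / δ) < 1) :
    ∃ x : ℝ → EuclideanSpace ℝ (Fin n),
      (ContinuousOn x (Icc a b) ∧
        ∀ t ∈ Ioc a b,
          x t = ((ψ t - ψ a) ^ (γ - 1) / Real.Gamma γ) • x₀
            + fracIntV α ψ a (fun s => f s (x s) (volterraK α ψ a k x s)) t) ∧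
      ∀ y : ℝ → EuclideanSpace ℝ (Fin n),
        (ContinuousOn y (Icc a b) ∧
          ∀ t ∈ Ioc a b,
            y t = ((ψ t - ψ a) ^ (γ - 1) / Real.Gamma γ) • x₀
              + fracIntV α ψ a (fun s => f s (y s) (volterraK α ψ a k y s)) t) →
        ∀ t ∈ Ioc a b, y t = x t := by
  have hψ : IsScaleOn ψ a b := ⟨hmono, hC1.continuousOn,
    (hC1.differentiableOn one_ne_zero).mono Ioo_subset_Icc_self⟩
  have hξ0 : 0 ≤ ξ := hξ ▸ by positivity
  have hsplit : ∀ r : ℝ, (r / Real.Gamma γ) • x₀ = r • (Real.Gamma γ)⁻¹ • x₀ := fun r => by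
    rw [div_eq_mul_inv, mul_smul]
  simp only [hsplit, fracIntV_eq_psiIntegral hα0.ne'] at hd2 ⊢
  obtain ⟨x, hx, hxuniq⟩ := hilfer_integrodifferential_existence_uniqueness_general hα0 hab hψ
    hL.le hM hξ0 hf.continuousOn hk.continuousOn (fun t _ => hfLip t) (fun t _ s _ => hkLip t s) hd2
  exact ⟨x, hx, fun y hy => (hxuniq y hy).mono Ioc_subset_Icc_self⟩
end
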